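/- arXiv:1212.1529 — 2 statements merged into one kernel-verified Lean document; each statement's English description precedes it below -/
import Mathlib

section
/- The class na(B_u) has the amalgamation property: if (A, <_A), (B, <_B), (C, <_C) are structures in na(B_u) and f : (A, <_A) → (B, <_B) and g : (A, <_A) → (C, <_C) are embeddings, then there exist a structure (D, <_D) in na(B_u) and embeddings r : (B, <_B) → (D, <_D) and s : (C, <_C) → (D, <_D) with r ∘ f = s ∘ g. -/
/-- A finite Boolean algebra with one distinguished subset and a distinguished binary
relation (the linear ordering). -/
structure OrdAlgU : Type 1 where
  carrier : Type
  [ba : BooleanAlgebra carrier]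
  [fin : Fintype carrier]
  P : Set carrier
  lt : carrier → carrier → Prop

attribute [instance] OrdAlgU.ba OrdAlgU.fin

namespace OrdAlgU

/-- The predicate is a (nontrivial) ideal. -/
def Ideal (A : OrdAlgU) : Prop :=
  (⊤ : A.carrier) ∉ A.P ∧
  (∀ x ∈ A.P, ∀ y : A.carrier, y ≤ x → y ∈ A.P) ∧
  (∀ x ∈ A.P, ∀ y ∈ A.P, x ⊔ y ∈ A.P)

/-- The ordering is proper on atoms: every atom in `P` precedes every atom not in `P`. -/
def Proper (A : OrdAlgU) : Prop :=
  ∀ a b : A.carrier, IsAtom a → IsAtom b → a ∈ A.P → b ∉ A.P → A.lt a b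

/-- The ordering is natural: a strict total (i.e. linear) order whose restriction to the
atoms is proper, and which is the antilexicographical extension of its restriction to atoms:
for distinct `a`, `b`, `a < b` iff the `<`-greatest atom lying below exactly one of `a`, `b`
lies below `b`. -/
def Natural (A : OrdAlgU) : Prop :=
  IsStrictTotalOrder A.carrier A.lt ∧ A.Proper ∧
  ∀ a b : A.carrier, a ≠ b →
    (A.lt a b ↔ ∃ c : A.carrier, IsAtom c ∧ c ≤ b ∧ ¬ c ≤ a ∧
      ∀ d : A.carrier, IsAtom d → ¬ (d ≤ a ↔ d ≤ b) → d = c ∨ A.lt d c)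

/-- Membership in the class `na(B_u)`: a naturally ordered finite Boolean algebra with an
ideal `P` such that exactly one atom does not belong to `P`. -/
def InNaBu (A : OrdAlgU) : Prop :=
  A.Ideal ∧ A.Natural ∧ ∃! a : A.carrier, IsAtom a ∧ a ∉ A.P

/-- An embedding: an injective map preserving `⊔`, `⊓`, `ᶜ`, `⊥`, `⊤`, the linear order
and the predicate. -/
structure Emb (A B : OrdAlgU) : Type where
  toFun : A.carrier → B.carrier
  inj : Function.Injective toFun
  map_sup : ∀ x y : A.carrier, toFun (x ⊔ y) = toFun x ⊔ toFun y
  map_inf : ∀ x y : A.carrier, toFun (x ⊓ y) = toFun x ⊓ toFun y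
  map_compl : ∀ x : A.carrier, toFun xᶜ = (toFun x)ᶜ
  map_bot : toFun ⊥ = ⊥
  map_top : toFun ⊤ = ⊤
  map_lt : ∀ x y : A.carrier, A.lt x y ↔ B.lt (toFun x) (toFun y)
  map_P : ∀ x : A.carrier, x ∈ A.P ↔ toFun x ∈ B.P

/-- The copies of `A` in `C`: images of embeddings of `A` into `C`. -/
def Copies (A C : OrdAlgU) : Set (Set C.carrier) :=
  {S | ∃ e : Emb A C, Set.range e.toFun = S}

end OrdAlgU

/-!
If `⊥ ∈ P`, a member of `na(B_u)` is the colexicographically ordered algebra of subsets of its chain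
of atoms, with `P` the sets omitting the greatest atom. Under this duality an embedding `f : A → B`
becomes the map sending an atom of `B` to the atom of `A` whose image lies above it. Since `f`
preserves the order, the greatest points of the fibres of this map increase: it is a rigid
surjection. So it suffices to complete a pair of rigid surjections `X → Z ← Y` of finite chains to a
commutative square. The greatest points of the fibres cut `X` and `Y` into blocks indexed by `Z`;
order `X ⊕ Y` by block, with the points of `X` before those of `Y` inside each block.

If `⊥ ∉ P`, then `P` is empty, so the algebras have a single atom and embeddings are isomorphisms.
-/

section Atoms

variable {α : Type*}

theorem le_sup_iff_of_isAtom [DistribLattice α] [OrderBot α] {a : α} (ha : IsAtom a) (x y : α) :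
    a ≤ x ⊔ y ↔ a ≤ x ∨ a ≤ y := by
  simp only [← ha.not_disjoint_iff_le, disjoint_sup_right, not_and_or]

theorem le_compl_iff_of_isAtom [BooleanAlgebra α] {a : α} (ha : IsAtom a) (x : α) :
    a ≤ xᶜ ↔ ¬ a ≤ x := by
  rw [ha.not_le_iff_disjoint, le_compl_iff_disjoint_right]

theorem sup_atom_induction [BooleanAlgebra α] [Finite α] {p : α → Prop} (x : α)
    (bot : p ⊥) (sup : ∀ y z : α, p y → p z → p (y ⊔ z)) (atom : ∀ a, IsAtom a → a ≤ x → p a) :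
    p x := by
  induction x using WellFoundedLT.induction with
  | ind x ih =>
    obtain rfl | ⟨a, ha, hax⟩ := eq_bot_or_exists_atom_le x
    · exact bot
    have hlt : x \ a < x := sdiff_lt hax ha.1
    rw [← sup_sdiff_cancel_right hax]
    exact sup a _ (atom a ha hax) (ih _ hlt fun b hb hbx => atom b hb (hbx.trans hlt.le))

end Atoms

theorem toColex_lt_toColex_iff_exists_forall_le {X : Type*} [LinearOrder X] {s t : Finset X} :
    toColex s < toColex t ↔ ∃ c ∈ t, c ∉ s ∧ ∀ d, ¬ (d ∈ s ↔ d ∈ t) → d ≤ c := by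
  constructor
  · rw [Finset.Colex.toColex_lt_toColex_iff_max'_mem]
    rintro ⟨hst, hmax⟩
    have hmem := Finset.max'_mem _ (Finset.symmDiff_nonempty.2 hst)
    refine ⟨_, hmax, fun hs => ?_, fun d hd => Finset.le_max' _ d ?_⟩
    · simp [Finset.mem_symmDiff, hs, hmax] at hmem
    · rw [Finset.mem_symmDiff]
      tauto
  · rintro ⟨c, hct, hcs, hc⟩
    refine Finset.Colex.toColex_lt_toColex_iff_exists_forall_lt.2
      ⟨c, hct, hcs, fun d hds hdt => (hc d (by tauto)).lt_of_ne ?_⟩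
    rintro rfl
    exact hcs hds

/-- A rigid surjection, in the order dual of the usual convention: every fibre has a greatest
element `last z`, and `last` is increasing. Embeddings of naturally ordered Boolean algebras
correspond to rigid surjections, in the opposite direction, between their chains of atoms. -/
structure RigidSurj (X Z : Type*) [Preorder X] [Preorder Z] where
  toFun : X → Z
  last : Z → X
  last_strictMono : StrictMono last
  toFun_last : ∀ z, toFun (last z) = z
  le_last : ∀ x, x ≤ last (toFun x)

namespace RigidSurj

instance {X Z : Type*} [Preorder X] [Preorder Z] : CoeFun (RigidSurj X Z) fun _ => X → Z :=
  ⟨toFun⟩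

variable {X Y Z : Type*} [LinearOrder X] [LinearOrder Y] [LinearOrder Z]

section Top

variable (φ : RigidSurj X Z)

theorem isTop_last {z : Z} (hz : IsTop z) : IsTop (φ.last z) :=
  fun x => (φ.le_last x).trans (φ.last_strictMono.monotone (hz _))

theorem isTop_apply {x : X} (hx : IsTop x) : IsTop (φ x) :=
  fun _ => φ.last_strictMono.le_iff_le.1 ((hx _).trans (φ.le_last x))

end Top

section Preimage

variable [Fintype X] (φ : RigidSurj X Z)

/-- The preimage of a finite set under a rigid surjection. (`Finset.preimage` would ask for
injectivity.) -/
def preimage (s : Finset Z) : Finset X :=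
  {x | φ x ∈ s}

@[simp]
theorem mem_preimage {s : Finset Z} {x : X} : x ∈ φ.preimage s ↔ φ x ∈ s := by
  simp [preimage]

theorem toColex_preimage_strictMono :
    StrictMono fun s : Colex (Finset Z) => toColex (φ.preimage (ofColex s)) := by
  intro s t hst
  obtain ⟨c, hct, hcs, hc⟩ := toColex_lt_toColex_iff_exists_forall_le.1 hst
  refine toColex_lt_toColex_iff_exists_forall_le.2 ⟨φ.last c, ?_, ?_, fun x hx => ?_⟩
  · rwa [mem_preimage, toFun_last]
  · rwa [mem_preimage, toFun_last]
  · rw [mem_preimage, mem_preimage] at hx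
    exact (φ.le_last x).trans (φ.last_strictMono.monotone (hc _ hx))

theorem preimage_injective : Function.Injective φ.preimage :=
  fun _ _ h => toColex_inj.1 (φ.toColex_preimage_strictMono.injective (congrArg toColex h))

theorem toColex_preimage_lt_toColex_preimage {s t : Finset Z} :
    toColex (φ.preimage s) < toColex (φ.preimage t) ↔ toColex s < toColex t :=
  φ.toColex_preimage_strictMono.lt_iff_lt

theorem forall_isTop_notMem_preimage {s : Finset Z} :
    (∀ x, IsTop x → x ∉ φ.preimage s) ↔ ∀ z, IsTop z → z ∉ s := by
  simp only [mem_preimage]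
  refine ⟨fun h z hz => ?_, fun h x hx => h _ (φ.isTop_apply hx)⟩
  simpa only [toFun_last] using h _ (φ.isTop_last hz)

end Preimage

section Block

variable [WellFoundedLT Z] (φ : RigidSurj X Z)

/-- The points `last z` cut `X` into consecutive intervals, each ending at its `last z`;
`block x` is the index of the interval containing `x`. -/
noncomputable def block (x : X) : Z :=
  wellFounded_lt.min {z | x ≤ φ.last z} ⟨φ x, φ.le_last x⟩

theorem gc_block_last : GaloisConnection φ.block φ.last := fun x _ =>
  ⟨fun h => (wellFounded_lt.min_mem {z | x ≤ φ.last z} ⟨φ x, φ.le_last x⟩).trans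
      (φ.last_strictMono.monotone h),
    WellFounded.min_le (s := {z | x ≤ φ.last z}) _⟩

theorem block_le_iff {x : X} {z : Z} : φ.block x ≤ z ↔ x ≤ φ.last z :=
  φ.gc_block_last x z

theorem block_last (z : Z) : φ.block (φ.last z) = z :=
  eq_of_forall_ge_iff fun _ => φ.block_le_iff.trans φ.last_strictMono.le_iff_le

end Block

/-- The amalgam of two rigid surjections onto the same chain. The points `φ.last z` and
`ψ.last z` are deliberately not identified: all that matters is that the latter comes last in
its block. -/
def Amalgam (_ : RigidSurj X Z) (_ : RigidSurj Y Z) := X ⊕ Y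

namespace Amalgam

variable {φ : RigidSurj X Z} {ψ : RigidSurj Y Z}

instance [Fintype X] [Fintype Y] : Fintype (Amalgam φ ψ) :=
  inferInstanceAs (Fintype (X ⊕ Y))

/-- The left inclusion into the amalgam. -/
def inl (x : X) : Amalgam φ ψ := Sum.inl x

/-- The right inclusion into the amalgam. -/
def inr (y : Y) : Amalgam φ ψ := Sum.inr y

open Classical in
/-- The greatest point of the amalgam over `x : X`. -/
noncomputable def fstLast (φ : RigidSurj X Z) (ψ : RigidSurj Y Z) (x : X) : Amalgam φ ψ :=
  if x ∈ Set.range φ.last then inr (ψ.last (φ x)) else inl x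

theorem fstLast_last (z : Z) : fstLast φ ψ (φ.last z) = inr (ψ.last z) := by
  rw [fstLast, if_pos ⟨z, rfl⟩, toFun_last]

theorem fstLast_of_notMem_range {x : X} (hx : x ∉ Set.range φ.last) : fstLast φ ψ x = inl x :=
  if_neg hx

variable [WellFoundedLT Z]

/-- The sort key defining the order of the amalgam: points are ordered by block, and within each
block the points of `X` precede those of `Y`. -/
noncomputable def key (φ : RigidSurj X Z) (ψ : RigidSurj Y Z) : Amalgam φ ψ → Z ×ₗ (X ⊕ₗ Y) :=
  Sum.elim (fun x => toLex (φ.block x, Sum.inlₗ x)) (fun y => toLex (ψ.block y, Sum.inrₗ y))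

theorem key_injective : Function.Injective (key φ ψ) :=
  Function.LeftInverse.injective (g := fun k => ofLex (ofLex k).2) (by rintro (x | y) <;> rfl)

noncomputable instance : LinearOrder (Amalgam φ ψ) :=
  LinearOrder.lift' (key φ ψ) key_injective

theorem inl_strictMono : StrictMono (inl : X → Amalgam φ ψ) := fun _ _ h =>
  Prod.Lex.toLex_strictMono (Prod.mk_lt_mk.2 <| .inr
    ⟨φ.gc_block_last.monotone_l h.le, Sum.Lex.inl_lt_inl_iff.2 h⟩)

theorem inr_strictMono : StrictMono (inr : Y → Amalgam φ ψ) := fun _ _ h =>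
  Prod.Lex.toLex_strictMono (Prod.mk_lt_mk.2 <| .inr
    ⟨ψ.gc_block_last.monotone_l h.le, Sum.Lex.inr_lt_inr_iff.2 h⟩)

theorem inl_lt_inr {x : X} {y : Y} :
    (inl x : Amalgam φ ψ) < inr y ↔ φ.block x ≤ ψ.block y := by
  refine (Prod.Lex.toLex_lt_toLex (x := (φ.block x, Sum.inlₗ x))
    (y := (ψ.block y, Sum.inrₗ y))).trans ?_
  simp [le_iff_lt_or_eq]

theorem inr_lt_inl {x : X} {y : Y} :
    (inr y : Amalgam φ ψ) < inl x ↔ ψ.block y < φ.block x := by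
  have hne : (inr y : Amalgam φ ψ) ≠ inl x := Sum.inr_ne_inl
  rw [← not_le, hne.symm.le_iff_lt, inl_lt_inr, not_le]

theorem inl_lt_inr_last {x : X} {z : Z} :
    (inl x : Amalgam φ ψ) < inr (ψ.last z) ↔ x ≤ φ.last z := by
  rw [inl_lt_inr, block_last, block_le_iff]

theorem inr_last_lt_inl {x : X} {z : Z} :
    (inr (ψ.last z) : Amalgam φ ψ) < inl x ↔ φ.last z < x := by
  rw [inr_lt_inl, block_last, ← not_le, block_le_iff, not_le]

/-- The projection of the amalgam onto its right factor. -/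
noncomputable def snd (φ : RigidSurj X Z) (ψ : RigidSurj Y Z) : RigidSurj (Amalgam φ ψ) Y where
  toFun := Sum.elim (fun x => ψ.last (φ x)) id
  last := inr
  last_strictMono := inr_strictMono
  toFun_last _ := rfl
  le_last := by
    rintro (x | y)
    · exact (inl_lt_inr_last.2 (φ.le_last x)).le
    · exact le_rfl

theorem fstLast_strictMono : StrictMono (fstLast φ ψ) := by
  intro x x' h
  by_cases hx : x ∈ Set.range φ.last <;> by_cases hx' : x' ∈ Set.range φ.last
  · obtain ⟨⟨z, rfl⟩, ⟨z', rfl⟩⟩ := And.intro hx hx'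
    rw [fstLast_last, fstLast_last]
    exact inr_strictMono (ψ.last_strictMono (φ.last_strictMono.lt_iff_lt.1 h))
  · obtain ⟨z, rfl⟩ := hx
    rwa [fstLast_last, fstLast_of_notMem_range hx', inr_last_lt_inl]
  · obtain ⟨z', rfl⟩ := hx'
    rw [fstLast_last, fstLast_of_notMem_range hx, inl_lt_inr_last]
    exact h.le
  · rw [fstLast_of_notMem_range hx, fstLast_of_notMem_range hx']
    exact inl_strictMono h

/-- The projection of the amalgam onto its left factor. -/
noncomputable def fst (φ : RigidSurj X Z) (ψ : RigidSurj Y Z) : RigidSurj (Amalgam φ ψ) X where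
  toFun := Sum.elim id (fun y => φ.last (ψ y))
  last := fstLast φ ψ
  last_strictMono := fstLast_strictMono
  toFun_last x := by
    by_cases hx : x ∈ Set.range φ.last
    · obtain ⟨z, rfl⟩ := hx
      rw [fstLast_last]
      exact congrArg φ.last (ψ.toFun_last z)
    · rw [fstLast_of_notMem_range hx]
      rfl
  le_last := by
    rintro (x | y)
    · by_cases hx : x ∈ Set.range φ.last
      · obtain ⟨z, rfl⟩ := hx
        exact (inl_lt_inr_last.2 le_rfl).le.trans_eq (fstLast_last z).symm
      · exact (fstLast_of_notMem_range hx).ge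
    · exact (inr_strictMono.monotone (ψ.le_last y)).trans_eq (fstLast_last (ψ y)).symm

theorem apply_fst_eq_apply_snd (w : Amalgam φ ψ) : φ (fst φ ψ w) = ψ (snd φ ψ w) := by
  rcases w with x | y
  · exact (ψ.toFun_last (φ x)).symm
  · exact φ.toFun_last (ψ y)

end Amalgam

end RigidSurj

namespace OrdAlgU

section Powerset

variable (X : Type) [LinearOrder X] [Fintype X]

/-- The colexicographically ordered algebra of subsets of a finite chain, with the ideal of the
sets that omit the greatest element: the model of the members of `na(B_u)` in which `⊥ ∈ P`. -/
abbrev powerset : OrdAlgU where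
  carrier := Finset X
  P := {s | ∀ t, IsTop t → t ∉ s}
  lt s t := toColex s < toColex t

variable {X}

theorem mem_powerset_P_iff {t : X} (ht : IsTop t) {s : Finset X} :
    s ∈ (powerset X).P ↔ t ∉ s :=
  ⟨fun h => h t ht, fun h _ hu => (hu.isMax.eq_of_le (ht _)) ▸ h⟩

variable (X)

theorem powerset_ideal [Nonempty X] : (powerset X).Ideal := by
  obtain ⟨t, ht : IsTop t⟩ := Finite.exists_max (id : X → X)
  refine ⟨fun h => h t ht (Finset.mem_univ t), fun s hs u hus v hv hvu => hs v hv (hus hvu),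
    fun s hs u hu v hv hvsu => ?_⟩
  exact (Finset.mem_union.1 hvsu).elim (hs v hv) (hu v hv)

theorem powerset_proper : (powerset X).Proper := by
  intro a b ha hb haP hbP
  obtain ⟨i, rfl⟩ := Finset.isAtom_iff.1 ha
  obtain ⟨j, rfl⟩ := Finset.isAtom_iff.1 hb
  have hj : IsTop j := by
    by_contra hj
    exact hbP fun t ht htj => hj (Finset.mem_singleton.1 htj ▸ ht)
  rw [mem_powerset_P_iff hj, Finset.mem_singleton] at haP
  exact Finset.Colex.singleton_lt_singleton.2 ((hj i).lt_of_ne' haP)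

theorem powerset_natural : (powerset X).Natural := by
  refine ⟨inferInstanceAs (IsStrictTotalOrder (Colex (Finset X)) (· < ·)), powerset_proper X,
    fun a b _ => toColex_lt_toColex_iff_exists_forall_le.trans ?_⟩
  simp only [le_iff_eq_or_lt (α := X)]
  simp [Finset.isAtom_iff, Finset.Colex.singleton_lt_singleton]

theorem powerset_existsUnique_atom_notMem_P [Nonempty X] :
    ∃! a : Finset X, IsAtom a ∧ a ∉ (powerset X).P := by
  obtain ⟨t, ht : IsTop t⟩ := Finite.exists_max (id : X → X)
  refine ⟨{t}, ⟨Finset.isAtom_singleton t, ?_⟩, ?_⟩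
  · simp [mem_powerset_P_iff ht]
  · rintro a ⟨ha, haP⟩
    obtain ⟨i, rfl⟩ := Finset.isAtom_iff.1 ha
    rw [mem_powerset_P_iff ht, not_not, Finset.mem_singleton] at haP
    rw [haP]

theorem powerset_inNaBu [Nonempty X] : (powerset X).InNaBu :=
  ⟨powerset_ideal X, powerset_natural X, powerset_existsUnique_atom_notMem_P X⟩

end Powerset

/-- The atoms of an ordered algebra. This is a structure rather than a subtype so that it can carry
the order `A.lt` instead of the trivial order inherited from the lattice. -/
@[ext]
structure Atom (A : OrdAlgU) : Type where
  val : A.carrier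
  isAtom : IsAtom val

variable {A B C : OrdAlgU}

noncomputable instance : Fintype (Atom A) :=
  .ofInjective Atom.val fun _ _ => Atom.ext

theorem Atom.eq_of_le {a b : Atom A} (h : a.val ≤ b.val) : a = b :=
  Atom.ext ((b.isAtom.le_iff.1 h).resolve_left a.isAtom.1)

open Classical in
noncomputable instance [hA : Fact A.Natural] : LinearOrder (Atom A) :=
  have := hA.out.1
  have : IsStrictTotalOrder (Atom A) fun a b => A.lt a.val b.val :=
    { irrefl a := irrefl_of A.lt a.val
      trans _ _ _ := trans_of A.lt
      trichotomous a b hab hba := Atom.ext (Std.Trichotomous.trichotomous a.val b.val hab hba) }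
  linearOrderOfSTO fun a b => A.lt a.val b.val

theorem Atom.lt_iff [Fact A.Natural] {a b : Atom A} : a < b ↔ A.lt a.val b.val :=
  Iff.rfl

theorem Atom.le_iff [Fact A.Natural] {a b : Atom A} :
    a ≤ b ↔ a.val = b.val ∨ A.lt a.val b.val := by
  rw [le_iff_eq_or_lt, Atom.ext_iff, Atom.lt_iff]

open Classical in
/-- The set of atoms below an element; `a ↦ atomsBelow a` identifies a finite Boolean algebra with
the powerset of its atoms. -/
noncomputable def atomsBelow (x : A.carrier) : Finset (Atom A) :=
  {a | a.val ≤ x}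

@[simp]
theorem mem_atomsBelow {a : Atom A} {x : A.carrier} : a ∈ atomsBelow x ↔ a.val ≤ x := by
  simp [atomsBelow]

theorem atomsBelow_injective : Function.Injective (atomsBelow (A := A)) := by
  intro x y hxy
  refine BooleanAlgebra.eq_iff_atom_le_iff.2 fun a ha => ?_
  simpa only [mem_atomsBelow] using Finset.ext_iff.1 hxy ⟨a, ha⟩

theorem atomsBelow_nonempty {x : A.carrier} (hx : x ≠ ⊥) : (atomsBelow x).Nonempty := by
  obtain ⟨a, ha, hax⟩ := (eq_bot_or_exists_atom_le x).resolve_left hx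
  exact ⟨⟨a, ha⟩, mem_atomsBelow.2 hax⟩

theorem lt_iff_toColex_atomsBelow_lt [hA : Fact A.Natural] {x y : A.carrier} :
    A.lt x y ↔ toColex (atomsBelow x) < toColex (atomsBelow y) := by
  obtain ⟨hlt, -, hlex⟩ := hA.out
  obtain rfl | hxy := eq_or_ne x y
  · exact iff_of_false (irrefl_of A.lt x) (lt_irrefl _)
  rw [hlex x y hxy, toColex_lt_toColex_iff_exists_forall_le]
  simp only [mem_atomsBelow, Atom.le_iff]
  exact ⟨fun ⟨c, hc, hcy, hcx, hmax⟩ => ⟨⟨c, hc⟩, hcy, hcx, fun d => hmax d.val d.isAtom⟩,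
    fun ⟨c, hcy, hcx, hmax⟩ => ⟨c.val, c.isAtom, hcy, hcx, fun d hd => hmax ⟨d, hd⟩⟩⟩

theorem Atom.isTop_iff_notMem_P [hA : Fact A.Natural]
    (hu : ∃! a : A.carrier, IsAtom a ∧ a ∉ A.P) {t : Atom A} : IsTop t ↔ t.val ∉ A.P := by
  have isTop_of_notMem {s : Atom A} (hs : s.val ∉ A.P) : IsTop s := by
    intro a
    by_cases ha : a.val ∈ A.P
    · exact (Atom.lt_iff.2 (hA.out.2.1 _ _ a.isAtom s.isAtom ha hs)).le
    · exact (Atom.ext (hu.unique ⟨a.isAtom, ha⟩ ⟨s.isAtom, hs⟩)).le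
  refine ⟨fun ht => ?_, isTop_of_notMem⟩
  obtain ⟨s, hs, hsP⟩ := hu.exists
  rwa [ht.isMax.eq_of_le (isTop_of_notMem (s := ⟨s, hs⟩) hsP t)]

theorem Ideal.mem_P_iff_forall_atom (hA : A.Ideal) (hbot : ⊥ ∈ A.P) {x : A.carrier} :
    x ∈ A.P ↔ ∀ a : Atom A, a.val ≤ x → a.val ∈ A.P :=
  ⟨fun hx _ hax => hA.2.1 x hx _ hax, fun h => sup_atom_induction x hbot
    (fun y z hy hz => hA.2.2 y hy z hz) fun a ha hax => h ⟨a, ha⟩ hax⟩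

theorem Ideal.mem_P_iff_forall_isTop [Fact A.Natural] (hA : A.Ideal)
    (hu : ∃! a : A.carrier, IsAtom a ∧ a ∉ A.P) (hbot : ⊥ ∈ A.P) {x : A.carrier} :
    x ∈ A.P ↔ ∀ t : Atom A, IsTop t → t ∉ atomsBelow x := by
  rw [hA.mem_P_iff_forall_atom hbot]
  simp only [Atom.isTop_iff_notMem_P hu, mem_atomsBelow]
  exact forall_congr' fun _ => not_imp_not.symm

theorem Ideal.eq_bot_or_eq_top (hA : A.Ideal) (hu : ∃! a : A.carrier, IsAtom a ∧ a ∉ A.P)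
    (hbot : ⊥ ∉ A.P) (x : A.carrier) : x = ⊥ ∨ x = ⊤ := by
  have notMem_P (y : A.carrier) : y ∉ A.P := fun hy => hbot (hA.2.1 y hy ⊥ bot_le)
  by_contra! hx
  obtain ⟨a, hax⟩ := atomsBelow_nonempty hx.1
  obtain ⟨b, hbx⟩ := atomsBelow_nonempty (compl_eq_bot.not.2 hx.2)
  rw [mem_atomsBelow] at hax hbx
  have hba : b.val = a.val := hu.unique ⟨b.isAtom, notMem_P _⟩ ⟨a.isAtom, notMem_P _⟩
  exact (le_compl_iff_of_isAtom b.isAtom x).1 hbx (hba ▸ hax)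

namespace Emb

theorem monotone (f : Emb A B) : Monotone f.toFun := fun x y h => by
  rw [← inf_eq_left, ← f.map_inf, inf_eq_left.2 h]

theorem exists_atom_le_map_iff (f : Emb A B) (b : Atom B) :
    ∃ a : Atom A, ∀ x, b.val ≤ f.toFun x ↔ a.val ≤ x := by
  obtain ⟨a, hba⟩ : ∃ a : Atom A, b.val ≤ f.toFun a.val := by
    by_contra! h
    refine sup_atom_induction (p := fun x => ¬ b.val ≤ f.toFun x) ⊤ ?_ (fun x y hx hy => ?_)
      (fun a ha _ => h ⟨a, ha⟩) (f.map_top ▸ le_top)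
    · rw [f.map_bot, le_bot_iff]
      exact b.isAtom.1
    · rw [f.map_sup, le_sup_iff_of_isAtom b.isAtom]
      exact not_or.2 ⟨hx, hy⟩
  refine ⟨a, fun x => ⟨fun hbx => ?_, fun hax => hba.trans (f.monotone hax)⟩⟩
  by_contra hax
  have hbx' := hba.trans (f.monotone ((le_compl_iff_of_isAtom a.isAtom x).2 hax))
  rw [f.map_compl, le_compl_iff_of_isAtom b.isAtom] at hbx'
  exact hbx' hbx

/-- The map on atoms dual to an embedding `f`: it sends `b` to the unique atom `a` with
`b ≤ f a`. -/
noncomputable def atomMap (f : Emb A B) (b : Atom B) : Atom A :=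
  (f.exists_atom_le_map_iff b).choose

theorem le_map_iff (f : Emb A B) {b : Atom B} {x : A.carrier} :
    b.val ≤ f.toFun x ↔ (f.atomMap b).val ≤ x :=
  (f.exists_atom_le_map_iff b).choose_spec x

theorem atomMap_eq_iff (f : Emb A B) {a : Atom A} {b : Atom B} :
    f.atomMap b = a ↔ b.val ≤ f.toFun a.val := by
  rw [f.le_map_iff]
  exact ⟨fun h => h ▸ le_rfl, Atom.eq_of_le⟩

theorem atomsBelow_map_nonempty (f : Emb A B) (a : Atom A) :
    (atomsBelow (f.toFun a.val)).Nonempty :=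
  atomsBelow_nonempty fun h => a.isAtom.1 (f.inj (h.trans f.map_bot.symm))

/-- The greatest atom of `B` below `f a`, for an embedding `f` of `A` into `B`. -/
noncomputable def lastAtom [Fact B.Natural] (f : Emb A B) (a : Atom A) : Atom B :=
  (atomsBelow (f.toFun a.val)).max' (f.atomsBelow_map_nonempty a)

theorem atomMap_lastAtom [Fact B.Natural] (f : Emb A B) (a : Atom A) :
    f.atomMap (f.lastAtom a) = a :=
  f.atomMap_eq_iff.2 (mem_atomsBelow.1 (Finset.max'_mem _ _))

theorem le_lastAtom [Fact B.Natural] (f : Emb A B) {a : Atom A} {b : Atom B}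
    (h : f.atomMap b = a) : b ≤ f.lastAtom a :=
  Finset.le_max' _ _ (mem_atomsBelow.2 (f.atomMap_eq_iff.1 h))

theorem lastAtom_strictMono [Fact A.Natural] [Fact B.Natural] (f : Emb A B) :
    StrictMono f.lastAtom := by
  intro a a' h
  have hlt := (f.map_lt _ _).1 (Atom.lt_iff.1 h)
  obtain ⟨c, hca', hca, hmax⟩ :=
    toColex_lt_toColex_iff_exists_forall_le.1 (lt_iff_toColex_atomsBelow_lt.1 hlt)
  simp only [mem_atomsBelow, ← f.atomMap_eq_iff] at hca' hca hmax
  calc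
    f.lastAtom a < c := by
      refine (hmax _ ?_).lt_of_ne fun hc => hca (hc ▸ f.atomMap_lastAtom a)
      simp [f.atomMap_lastAtom, h.ne]
    c ≤ f.lastAtom a' := f.le_lastAtom hca'

/-- The rigid surjection between the chains of atoms that is dual to an embedding. -/
noncomputable def dual [Fact A.Natural] [Fact B.Natural] (f : Emb A B) :
    RigidSurj (Atom B) (Atom A) where
  toFun := f.atomMap
  last := f.lastAtom
  last_strictMono := f.lastAtom_strictMono
  toFun_last := f.atomMap_lastAtom
  le_last _ := f.le_lastAtom rfl

/-- The embedding into a powerset algebra induced by a rigid surjection onto the atoms. -/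
noncomputable def ofRigidSurj [Fact B.Natural] (hB : B.Ideal)
    (hu : ∃! a : B.carrier, IsAtom a ∧ a ∉ B.P) (hbot : ⊥ ∈ B.P) {X : Type} [LinearOrder X]
    [Fintype X] (φ : RigidSurj X (Atom B)) : Emb B (powerset X) where
  toFun x := φ.preimage (atomsBelow x)
  inj := φ.preimage_injective.comp atomsBelow_injective
  map_sup x y := by ext w; simp [le_sup_iff_of_isAtom (φ w).isAtom]
  map_inf x y := by ext w; simp
  map_compl x := by ext w; simp [le_compl_iff_of_isAtom (φ w).isAtom]
  map_bot := by ext w; simp [(φ w).isAtom.1]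
  map_top := by ext w; simp
  map_lt _ _ := lt_iff_toColex_atomsBelow_lt.trans φ.toColex_preimage_lt_toColex_preimage.symm
  map_P _ := (hB.mem_P_iff_forall_isTop hu hbot).trans φ.forall_isTop_notMem_preimage.symm

theorem mem_ofRigidSurj_map_iff [Fact A.Natural] [Fact B.Natural] (f : Emb A B) (hB : B.Ideal)
    (hu : ∃! a : B.carrier, IsAtom a ∧ a ∉ B.P) (hbot : ⊥ ∈ B.P) {X : Type} [LinearOrder X]
    [Fintype X] (φ : RigidSurj X (Atom B)) {x : A.carrier} {w : X} :
    w ∈ (ofRigidSurj hB hu hbot φ).toFun (f.toFun x) ↔ (f.dual (φ w)).val ≤ x := by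
  simp only [ofRigidSurj, RigidSurj.mem_preimage, mem_atomsBelow, f.le_map_iff, dual]

/-- The identity embedding. -/
def refl (A : OrdAlgU) : Emb A A where
  toFun := id
  inj := Function.injective_id
  map_sup _ _ := rfl
  map_inf _ _ := rfl
  map_compl _ := rfl
  map_bot := rfl
  map_top := rfl
  map_lt _ _ := Iff.rfl
  map_P _ := Iff.rfl

/-- The composition of embeddings. -/
def trans (f : Emb A B) (g : Emb B C) : Emb A C where
  toFun := g.toFun ∘ f.toFun
  inj := g.inj.comp f.inj
  map_sup x y := by simp [f.map_sup, g.map_sup]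
  map_inf x y := by simp [f.map_inf, g.map_inf]
  map_compl x := by simp [f.map_compl, g.map_compl]
  map_bot := by simp [f.map_bot, g.map_bot]
  map_top := by simp [f.map_top, g.map_top]
  map_lt x y := (f.map_lt x y).trans (g.map_lt _ _)
  map_P x := (f.map_P x).trans (g.map_P _)

/-- The inverse of a surjective embedding. -/
noncomputable def symm (f : Emb A B) (hf : Function.Surjective f.toFun) : Emb B A where
  toFun := Function.surjInv hf
  inj := Function.injective_surjInv hf
  map_sup x y := f.inj (by simp only [f.map_sup, Function.surjInv_eq])
  map_inf x y := f.inj (by simp only [f.map_inf, Function.surjInv_eq])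
  map_compl x := f.inj (by simp only [f.map_compl, Function.surjInv_eq])
  map_bot := f.inj (by rw [Function.surjInv_eq hf, f.map_bot])
  map_top := f.inj (by rw [Function.surjInv_eq hf, f.map_top])
  map_lt x y := by simp only [f.map_lt, Function.surjInv_eq]
  map_P x := by rw [f.map_P, Function.surjInv_eq hf]

theorem symm_apply_apply (f : Emb A B) (hf : Function.Surjective f.toFun) (x : A.carrier) :
    (f.symm hf).toFun (f.toFun x) = x :=
  Function.leftInverse_surjInv ⟨f.inj, hf⟩ x

theorem surjective_of_bot_notMem_P (f : Emb A B) (hB : B.Ideal)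
    (hu : ∃! b : B.carrier, IsAtom b ∧ b ∉ B.P) (hbot : ⊥ ∉ B.P) :
    Function.Surjective f.toFun := by
  intro b
  obtain rfl | rfl := hB.eq_bot_or_eq_top hu hbot b
  exacts [⟨⊥, f.map_bot⟩, ⟨⊤, f.map_top⟩]

theorem bot_mem_P_iff (f : Emb A B) : ⊥ ∈ B.P ↔ ⊥ ∈ A.P := by
  rw [f.map_P, f.map_bot]

end Emb

end OrdAlgU

/-!
STATEMENT 5: The class na(B_u) has the amalgamation property.
-/

theorem naBu_amalgamation
    (A B C : OrdAlgU) (hA : A.InNaBu) (hB : B.InNaBu) (hC : C.InNaBu)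
    (f : OrdAlgU.Emb A B) (g : OrdAlgU.Emb A C) :
    ∃ D : OrdAlgU, D.InNaBu ∧
      ∃ (r : OrdAlgU.Emb B D) (s : OrdAlgU.Emb C D),
        r.toFun ∘ f.toFun = s.toFun ∘ g.toFun := by
  by_cases hbot : ⊥ ∈ A.P
  · have : Fact A.Natural := ⟨hA.2.1⟩
    have : Fact B.Natural := ⟨hB.2.1⟩
    have : Fact C.Natural := ⟨hC.2.1⟩
    let W := RigidSurj.Amalgam f.dual g.dual
    let p : RigidSurj W B.Atom := RigidSurj.Amalgam.fst f.dual g.dual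
    let q : RigidSurj W C.Atom := RigidSurj.Amalgam.snd f.dual g.dual
    obtain ⟨b, hb, -⟩ := hB.2.2.exists
    have : Nonempty W := ⟨.inl ⟨b, hb⟩⟩
    let r := OrdAlgU.Emb.ofRigidSurj hB.1 hB.2.2 (f.bot_mem_P_iff.2 hbot) p
    let s := OrdAlgU.Emb.ofRigidSurj hC.1 hC.2.2 (g.bot_mem_P_iff.2 hbot) q
    refine ⟨.powerset W, OrdAlgU.powerset_inNaBu W, r, s, ?_⟩
    ext a w
    calc
      w ∈ r.toFun (f.toFun a) ↔ (f.dual (p w)).val ≤ a := f.mem_ofRigidSurj_map_iff ..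
      _ ↔ (g.dual (q w)).val ≤ a := by rw [RigidSurj.Amalgam.apply_fst_eq_apply_snd]
      _ ↔ w ∈ s.toFun (g.toFun a) := (g.mem_ofRigidSurj_map_iff ..).symm
  · have hf := f.surjective_of_bot_notMem_P hB.1 hB.2.2 (f.bot_mem_P_iff.not.2 hbot)
    refine ⟨C, hC, (f.symm hf).trans g, .refl C, funext fun a => ?_⟩
    exact congrArg g.toFun (f.symm_apply_apply hf a)
end

section
/- The class na(B_J^u) has the amalgamation property: if (A, <_A), (B, <_B), (C, <_C) are structures in na(B_J^u) and f : (A, <_A) → (B, <_B) and g : (A, <_A) → (C, <_C) are embeddings, then there exist a structure (D, <_D) in na(B_J^u) and embeddings r : (B, <_B) → (D, <_D) and s : (C, <_C) → (D, <_D) with r ∘ f = s ∘ g. -/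
/-- A finite Boolean algebra with a `J`-indexed family of distinguished subsets
and a distinguished binary relation (the linear ordering). -/
structure OrdAlg (J : Type) [LinearOrder J] : Type 1 where
  carrier : Type
  [ba : BooleanAlgebra carrier]
  [fin : Fintype carrier]
  P : J → Set carrier
  lt : carrier → carrier → Prop

attribute [instance] OrdAlg.ba OrdAlg.fin

namespace OrdAlg

variable {J : Type} [LinearOrder J]

/-- The predicates form an increasing family of (nontrivial) ideals: this makes
the structure a `J`-algebra. -/
def IdealFam (A : OrdAlg J) : Prop :=
  (∀ j : J, (⊤ : A.carrier) ∉ A.P j) ∧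
  (∀ j : J, ∀ x ∈ A.P j, ∀ y : A.carrier, y ≤ x → y ∈ A.P j) ∧
  (∀ j : J, ∀ x ∈ A.P j, ∀ y ∈ A.P j, x ⊔ y ∈ A.P j) ∧
  (∀ i j : J, i ≤ j → A.P i ⊆ A.P j)

/-- The ordering is proper on atoms: atoms in some ideal `P i` come before atoms not in `P i`. -/
def Proper (A : OrdAlg J) : Prop :=
  ∀ a b : A.carrier, IsAtom a → IsAtom b → (∃ i : J, a ∈ A.P i ∧ b ∉ A.P i) → A.lt a b

/-- The ordering is natural: a strict total (i.e. linear) order whose restriction to the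
atoms is proper, and which is the antilexicographical extension of its restriction to atoms:
for distinct `a`, `b`, `a < b` iff the `<`-greatest atom lying below exactly one of `a`, `b`
lies below `b`. -/
def Natural (A : OrdAlg J) : Prop :=
  IsStrictTotalOrder A.carrier A.lt ∧ A.Proper ∧
  ∀ a b : A.carrier, a ≠ b →
    (A.lt a b ↔ ∃ c : A.carrier, IsAtom c ∧ c ≤ b ∧ ¬ c ≤ a ∧
      ∀ d : A.carrier, IsAtom d → ¬ (d ≤ a ↔ d ≤ b) → d = c ∨ A.lt d c)

/-- Membership in the class `na(B_J)`: a naturally ordered `J`-algebra with at least one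
atom lying in no `P j`. -/
def InNaBJ (A : OrdAlg J) : Prop :=
  A.IdealFam ∧ A.Natural ∧ ∃ a : A.carrier, IsAtom a ∧ ∀ j : J, a ∉ A.P j

/-- Membership in the class `na(B_J^u)`: a naturally ordered `J`-algebra in which all atoms
except exactly one belong to some `P j`. -/
def InNaBJu (A : OrdAlg J) : Prop :=
  A.IdealFam ∧ A.Natural ∧ ∃! a : A.carrier, IsAtom a ∧ ∀ j : J, a ∉ A.P j

/-- An embedding of ordered `J`-algebras: an injective map preserving `⊔`, `⊓`, `ᶜ`,
`⊥`, `⊤`, the linear order and each predicate. -/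
structure Emb (A B : OrdAlg J) : Type where
  toFun : A.carrier → B.carrier
  inj : Function.Injective toFun
  map_sup : ∀ x y : A.carrier, toFun (x ⊔ y) = toFun x ⊔ toFun y
  map_inf : ∀ x y : A.carrier, toFun (x ⊓ y) = toFun x ⊓ toFun y
  map_compl : ∀ x : A.carrier, toFun xᶜ = (toFun x)ᶜ
  map_bot : toFun ⊥ = ⊥
  map_top : toFun ⊤ = ⊤
  map_lt : ∀ x y : A.carrier, A.lt x y ↔ B.lt (toFun x) (toFun y)
  map_P : ∀ (j : J) (x : A.carrier), x ∈ A.P j ↔ toFun x ∈ B.P j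

/-- The copies of `A` in `C`: images of embeddings of `A` into `C`. -/
def Copies (A C : OrdAlg J) : Set (Set C.carrier) :=
  {S | ∃ e : Emb A C, Set.range e.toFun = S}

end OrdAlg

/-!
STATEMENT 6: The class na(B_J^u) has the amalgamation property.
-/

/-!
A naturally ordered `J`-algebra is the powerset of a finite chain, its atoms, each atom labelled by
the set of `j` whose ideal contains it, and the labels decrease along the chain. Dually, embeddings
are label-preserving rigid surjections: monotonicity for the antilexicographical order says exactly
that the map sending a point to the greatest element of its fibre is strictly monotone.

Given rigid surjections `φ : Y → X` and `ψ : Z → X`, the amalgam consists of the pairs `(y, z)` in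
the fibre product such that `y` or `z` is greatest in its fibre. It is ordered by embedding `Y` and
`Z`, identified along `X`, into a common chain: compare first the label, then the cut of `X`, and
within a cut put all of `Y` before all of `Z`, the point of `X` coming last.
-/

/-- A finite linear order whose points carry increasing labels in `L`, bounded below by `base`. As
the dual of a `J`-algebra, with `L = UpperSet J` ordered by reverse inclusion, the points are the
atoms, labelled by the set of `j` such that `P j` contains them, and `base` is the set of `j` such
that `P j` is nonempty. -/
structure LabelledChain (L : Type*) [LinearOrder L] where
  carrier : Type
  [linearOrder : LinearOrder carrier]
  [fintype : Fintype carrier]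
  base : L
  label : carrier → L
  label_mono : Monotone label
  base_le_label : ∀ x, base ≤ label x

attribute [instance] LabelledChain.linearOrder LabelledChain.fintype

instance {L : Type*} [LinearOrder L] : CoeSort (LabelledChain L) Type := ⟨LabelledChain.carrier⟩

/-- A label-preserving rigid surjection between labelled chains: `sec x` is the greatest element of
the fibre of `x`, and it has the same label as `x`. This is the dual of an embedding of ordered
`J`-algebras. -/
structure RigidSurj_s6 {L : Type*} [LinearOrder L] (Y X : LabelledChain L) where
  toFun : Y → X
  sec : X → Y
  toFun_sec : ∀ x, toFun (sec x) = x
  le_sec : ∀ y, y ≤ sec (toFun y)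
  sec_strictMono : StrictMono sec
  label_sec : ∀ x, Y.label (sec x) = X.label x
  base_eq : Y.base = X.base

namespace RigidSurj_s6

variable {L : Type*} [LinearOrder L] {X Y Z : LabelledChain L}

instance : CoeFun (RigidSurj_s6 Y X) fun _ => Y → X := ⟨RigidSurj_s6.toFun⟩

attribute [simp] toFun_sec label_sec

theorem label_le (φ : RigidSurj_s6 Y X) (y : Y) : Y.label y ≤ X.label (φ y) :=
  (Y.label_mono (φ.le_sec y)).trans_eq (φ.label_sec _)

/-! ### Amalgamation of labelled chains -/

section Position

variable {W : Type*}

/-- The cut of `X` at which `y` lies when `X` is regarded as a subchain of `Y` through `sec`. -/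
def cut (φ : RigidSurj_s6 Y X) (y : Y) : LowerSet X where
  carrier := {x | φ.sec x < y}
  lower' _ _ hle hlt := (φ.sec_strictMono.monotone hle).trans_lt hlt

/-- The position of `y` in a chain containing `Y` together with other chains over `X`: points are
compared by label, then by their cut of `X`, then by the tie-breaking map `ι`. The points of `X`
itself are sent to `⊤` in the last coordinate, so that their position does not depend on `Y`. -/
noncomputable def position (φ : RigidSurj_s6 Y X) (ι : Y → W) (y : Y) :
    L ×ₗ (LowerSet X ×ₗ WithTop W) :=
  toLex (Y.label y, toLex (φ.cut y, if φ.sec (φ y) = y then ⊤ else ↑(ι y)))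

theorem cut_sec (φ : RigidSurj_s6 Y X) (x : X) : φ.cut (φ.sec x) = LowerSet.Iio x :=
  LowerSet.ext <| Set.ext fun _ => φ.sec_strictMono.lt_iff_lt

theorem cut_mono (φ : RigidSurj_s6 Y X) : Monotone φ.cut := fun _ _ hle _ hlt => hlt.trans_le hle

theorem cut_sec_lt (φ : RigidSurj_s6 Y X) {x : X} {y : Y} (hlt : φ.sec x < y) :
    φ.cut (φ.sec x) < φ.cut y :=
  (φ.cut_mono hlt.le).lt_of_not_ge fun hle => lt_irrefl (φ.sec x) (hle hlt)

theorem position_sec (φ : RigidSurj_s6 Y X) (ι : Y → W) (x : X) :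
    φ.position ι (φ.sec x) = toLex (X.label x, toLex (LowerSet.Iio x, ⊤)) := by
  simp [position, cut_sec]

theorem position_strictMono [LinearOrder W] (φ : RigidSurj_s6 Y X) {ι : Y → W} (hι : StrictMono ι) :
    StrictMono (φ.position ι) := by
  intro y y' hlt
  refine Prod.Lex.toLex_lt_toLex'.2 ⟨Y.label_mono hlt.le, fun _ =>
    Prod.Lex.toLex_lt_toLex'.2 ⟨φ.cut_mono hlt.le, fun hcut => ?_⟩⟩
  have hy : φ.sec (φ y) ≠ y := fun hy => (φ.cut_sec_lt (hy.trans_lt hlt)).ne (by rwa [hy])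
  by_cases hy' : φ.sec (φ y') = y'
  · simp [hy, hy']
  · simpa [hy, hy'] using hι hlt

theorem position_le_position_sec [LinearOrder W] (φ : RigidSurj_s6 Y X) {ι : Y → W}
    (hι : StrictMono ι) (y : Y) :
    φ.position ι y ≤ φ.position ι (φ.sec (φ y)) :=
  (φ.position_strictMono hι).monotone (φ.le_sec y)

theorem exists_sec_of_position_eq (φ : RigidSurj_s6 Y X) (ψ : RigidSurj_s6 Z X) {ι : Y → W} {κ : Z → W}
    (hdisj : ∀ y z, ι y ≠ κ z) {y : Y} {z : Z} (heq : φ.position ι y = ψ.position κ z) :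
    ∃ x, y = φ.sec x ∧ z = ψ.sec x := by
  obtain ⟨-, hcut, htie⟩ : Y.label y = Z.label z ∧ φ.cut y = ψ.cut z ∧
      (if φ.sec (φ y) = y then (⊤ : WithTop W) else ι y) =
        if ψ.sec (ψ z) = z then ⊤ else ↑(κ z) := by
    simpa [position] using heq
  have hsec : φ.sec (φ y) = y ∧ ψ.sec (ψ z) = z := by
    split_ifs at htie <;> simp_all
  have hx : φ y = ψ z := by
    rw [← hsec.1, ← hsec.2, cut_sec, cut_sec] at hcut
    exact Set.Iio_injective (congrArg SetLike.coe hcut)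
  exact ⟨φ y, hsec.1.symm, by rw [hx, hsec.2]⟩

end Position

/-- The points of the amalgam of two rigid surjections onto `X`: the pairs in the fibre product one
of whose components is greatest in its fibre. -/
@[ext]
structure AmalgamPoint (φ : RigidSurj_s6 Y X) (ψ : RigidSurj_s6 Z X) where
  fst : Y
  snd : Z
  comm : φ fst = ψ snd
  greatest : φ.sec (φ fst) = fst ∨ ψ.sec (ψ snd) = snd

namespace AmalgamPoint

variable (φ : RigidSurj_s6 Y X) (ψ : RigidSurj_s6 Z X)

/-- The greatest point over `y`. -/
def inl (y : Y) : AmalgamPoint φ ψ := ⟨y, ψ.sec (φ y), by simp, by simp⟩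

/-- The greatest point over `z`. -/
def inr (z : Z) : AmalgamPoint φ ψ := ⟨φ.sec (ψ z), z, by simp, by simp⟩

variable {φ ψ}

theorem inl_sec (x : X) : inl φ ψ (φ.sec x) = inr φ ψ (ψ.sec x) := by
  simp [inl, inr]

theorem eq_inl_or_eq_inr (d : AmalgamPoint φ ψ) : d = inl φ ψ d.fst ∨ d = inr φ ψ d.snd := by
  obtain ⟨y, z, hcomm, hy | hz⟩ := d
  · exact .inr (AmalgamPoint.ext (by simp [inr, ← hcomm, hy]) rfl)
  · exact .inl (AmalgamPoint.ext rfl (by simp [inl, hcomm, hz]))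

/-- The position of a point of the amalgam in a common chain containing `Y` and `Z`. One of its
components has the greatest position over a point of `X`, so the minimum selects the other one. -/
noncomputable def position (d : AmalgamPoint φ ψ) :
    L ×ₗ (LowerSet X ×ₗ WithTop (Y ⊕ₗ Z)) :=
  φ.position (toLex ∘ Sum.inl) d.fst ⊓ ψ.position (toLex ∘ Sum.inr) d.snd

theorem position_inl (y : Y) : (inl φ ψ y).position = φ.position (toLex ∘ Sum.inl) y := by
  have hle := φ.position_le_position_sec (Sum.Lex.inl_strictMono (β := Z)) y
  rw [position_sec, ← ψ.position_sec (toLex ∘ Sum.inr)] at hle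
  exact inf_eq_left.2 hle

theorem position_inr (z : Z) : (inr φ ψ z).position = ψ.position (toLex ∘ Sum.inr) z := by
  have hle := ψ.position_le_position_sec (Sum.Lex.inr_strictMono (α := Y)) z
  rw [position_sec, ← φ.position_sec (toLex ∘ Sum.inl)] at hle
  exact inf_eq_right.2 hle

theorem inl_eq_inr_of_position_eq {y : Y} {z : Z}
    (heq : (inl φ ψ y).position = (inr φ ψ z).position) : inl φ ψ y = inr φ ψ z := by
  rw [position_inl, position_inr] at heq
  obtain ⟨x, rfl, rfl⟩ := exists_sec_of_position_eq φ ψ (by simp) heq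
  exact inl_sec x

theorem position_injective : Function.Injective (position : AmalgamPoint φ ψ → _) := by
  intro d d' heq
  rcases d.eq_inl_or_eq_inr with hd | hd <;> rcases d'.eq_inl_or_eq_inr with hd' | hd' <;>
    rw [hd, hd'] at heq ⊢
  · rw [position_inl, position_inl] at heq
    rw [(φ.position_strictMono Sum.Lex.inl_strictMono).injective heq]
  · exact inl_eq_inr_of_position_eq heq
  · exact (inl_eq_inr_of_position_eq heq.symm).symm
  · rw [position_inr, position_inr] at heq
    rw [(ψ.position_strictMono Sum.Lex.inr_strictMono).injective heq]

noncomputable instance : LinearOrder (AmalgamPoint φ ψ) :=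
  LinearOrder.lift' position position_injective

noncomputable instance : Fintype (AmalgamPoint φ ψ) :=
  .ofInjective (fun d => (d.fst, d.snd)) fun _ _ heq =>
    AmalgamPoint.ext (congrArg Prod.fst heq) (congrArg Prod.snd heq)

theorem inl_strictMono : StrictMono (inl φ ψ) := fun y y' hlt => by
  change (inl φ ψ y).position < (inl φ ψ y').position
  simpa only [position_inl] using φ.position_strictMono Sum.Lex.inl_strictMono hlt

theorem inr_strictMono : StrictMono (inr φ ψ) := fun z z' hlt => by
  change (inr φ ψ z).position < (inr φ ψ z').position
  simpa only [position_inr] using ψ.position_strictMono Sum.Lex.inr_strictMono hlt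

theorem le_inl_fst (d : AmalgamPoint φ ψ) : d ≤ inl φ ψ d.fst := by
  rcases d.eq_inl_or_eq_inr with hd | hd
  · exact hd.le
  · calc d = inr φ ψ d.snd := hd
      _ ≤ inr φ ψ (ψ.sec (ψ d.snd)) := inr_strictMono.monotone (ψ.le_sec _)
      _ = inl φ ψ d.fst := by rw [← inl_sec, hd]; rfl

theorem le_inr_snd (d : AmalgamPoint φ ψ) : d ≤ inr φ ψ d.snd := by
  rcases d.eq_inl_or_eq_inr with hd | hd
  · calc d = inl φ ψ d.fst := hd
      _ ≤ inl φ ψ (φ.sec (φ d.fst)) := inl_strictMono.monotone (φ.le_sec _)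
      _ = inr φ ψ d.snd := by rw [inl_sec, hd]; rfl
  · exact hd.le

/-- The label of a point of the amalgam, which is the one given by its `position`. -/
def label (d : AmalgamPoint φ ψ) : L := Y.label d.fst ⊓ Z.label d.snd

theorem label_eq_fst_position (d : AmalgamPoint φ ψ) : d.label = (ofLex d.position).1 :=
  (Prod.Lex.monotone_fst_ofLex.map_inf (φ.position (toLex ∘ Sum.inl) d.fst)
    (ψ.position (toLex ∘ Sum.inr) d.snd)).symm

theorem label_mono : Monotone (label : AmalgamPoint φ ψ → L) := fun _ _ hle => by
  rw [label_eq_fst_position, label_eq_fst_position]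
  exact Prod.Lex.monotone_fst_ofLex hle

theorem label_inl (y : Y) : (inl φ ψ y).label = Y.label y := by
  simpa [label, inl] using φ.label_le y

theorem label_inr (z : Z) : (inr φ ψ z).label = Z.label z := by
  simpa [label, inr] using ψ.label_le z

end AmalgamPoint

open AmalgamPoint

variable (φ : RigidSurj_s6 Y X) (ψ : RigidSurj_s6 Z X)

/-- The amalgam of two rigid surjections onto `X`. -/
noncomputable def amalgam : LabelledChain L where
  carrier := AmalgamPoint φ ψ
  base := X.base
  label := label
  label_mono := label_mono
  base_le_label _ := le_inf (φ.base_eq ▸ Y.base_le_label _) (ψ.base_eq ▸ Z.base_le_label _)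

/-- The first projection of the amalgam, with section `AmalgamPoint.inl`. -/
noncomputable def amalgamFst : RigidSurj_s6 (amalgam φ ψ) Y where
  toFun := AmalgamPoint.fst
  sec := inl φ ψ
  toFun_sec _ := rfl
  le_sec := le_inl_fst
  sec_strictMono := inl_strictMono
  label_sec := label_inl
  base_eq := φ.base_eq.symm

/-- The second projection of the amalgam, with section `AmalgamPoint.inr`. -/
noncomputable def amalgamSnd : RigidSurj_s6 (amalgam φ ψ) Z where
  toFun := AmalgamPoint.snd
  sec := inr φ ψ
  toFun_sec _ := rfl
  le_sec := le_inr_snd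
  sec_strictMono := inr_strictMono
  label_sec := label_inr
  base_eq := ψ.base_eq.symm

theorem existsUnique_label_amalgam_eq_top [OrderTop L] (hY : ∃! y, Y.label y = ⊤)
    (hZ : ∃! z, Z.label z = ⊤) : ∃! d, (amalgam φ ψ).label d = ⊤ := by
  obtain ⟨y, hy, -⟩ := id hY
  refine ⟨inl φ ψ y, (label_inl y).trans hy, fun _ hd => ?_⟩
  have huniq : ∀ d d' : AmalgamPoint φ ψ, d.label = ⊤ → d'.label = ⊤ → d = d' := by
    intro d d' hd hd'
    rw [label, inf_eq_top_iff] at hd hd'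
    exact AmalgamPoint.ext (hY.unique hd.1 hd'.1) (hZ.unique hd.2 hd'.2)
  exact huniq _ _ hd ((label_inl y).trans hy)

end RigidSurj_s6

/-! ### The ordered algebra of a labelled chain -/

theorem upperSet_eq_top_iff {α : Type*} [LE α] {s : UpperSet α} : s = ⊤ ↔ ∀ a, a ∉ s := by
  rw [← SetLike.coe_set_eq, UpperSet.coe_top, Set.eq_empty_iff_forall_notMem]
  rfl

/-- The condition defining the antilexicographical order in `OrdAlg.Natural`, for finite sets. -/
theorem toColex_lt_toColex_iff_exists_greatest {α : Type*} [LinearOrder α] {s t : Finset α} :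
    toColex s < toColex t ↔ ∃ a ∈ t, a ∉ s ∧ ∀ b, ¬ (b ∈ s ↔ b ∈ t) → b = a ∨ b < a := by
  simp only [Finset.Colex.lt_iff_exists_filter_lt, Finset.mem_sdiff, Finset.filter_inj, and_assoc,
    ← le_iff_eq_or_lt, ← not_lt, not_imp_not]

namespace LabelledChain

variable {J : Type} [LinearOrder J] (X : LabelledChain (UpperSet J))

/-- The powerset of a labelled chain, with the antilexicographical order. -/
abbrev algebra : OrdAlg J where
  carrier := Finset X
  P j := {s | j ∈ X.base ∧ ∀ x ∈ s, j ∈ X.label x}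
  lt s t := toColex s < toColex t

variable {X}

theorem singleton_mem_P {j : J} {x : X} : ({x} : Finset X) ∈ X.algebra.P j ↔ j ∈ X.label x :=
  ⟨fun h => h.2 x (Finset.mem_singleton_self x), fun h => ⟨X.base_le_label x h, by simpa⟩⟩

theorem label_eq_top_iff {x : X} : X.label x = ⊤ ↔ ∀ j, ({x} : Finset X) ∉ X.algebra.P j :=
  upperSet_eq_top_iff.trans <| forall_congr' fun _ => not_congr singleton_mem_P.symm

theorem idealFam_algebra (hX : ∃ x, X.label x = ⊤) : X.algebra.IdealFam := by
  obtain ⟨x, hx⟩ := hX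
  refine ⟨fun j hj => ?_, fun j s hs t hle => ⟨hs.1, fun y hy => hs.2 y (hle hy)⟩,
    fun j s hs t ht => ⟨hs.1, fun y hy => ?_⟩,
    fun i j hij s hs => ⟨X.base.upper hij hs.1, fun y hy => (X.label y).upper hij (hs.2 y hy)⟩⟩
  · have hmem : j ∈ X.label x := hj.2 x (Finset.mem_univ x)
    exact UpperSet.notMem_top (hx ▸ hmem)
  · exact (Finset.mem_union.1 hy).elim (hs.2 y) (ht.2 y)

theorem proper_algebra : X.algebra.Proper := by
  rintro s t hs ht ⟨j, hsj, htj⟩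
  obtain ⟨x, rfl⟩ := Finset.isAtom_iff.1 hs
  obtain ⟨y, rfl⟩ := Finset.isAtom_iff.1 ht
  rw [singleton_mem_P] at hsj htj
  exact Finset.Colex.singleton_lt_singleton.2 <|
    lt_of_not_ge fun hle => htj (X.label_mono hle hsj)

theorem natural_algebra : X.algebra.Natural := by
  refine ⟨inferInstanceAs (IsStrictTotalOrder (Colex (Finset X)) (· < ·)), proper_algebra,
    fun s t _ => toColex_lt_toColex_iff_exists_greatest.trans ?_⟩
  simp [Finset.isAtom_iff, Finset.Colex.singleton_lt_singleton]

theorem inNaBJu_algebra (hX : ∃! x, X.label x = ⊤) : X.algebra.InNaBJu := by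
  refine ⟨idealFam_algebra hX.exists, natural_algebra, ?_⟩
  obtain ⟨x, hx, huniq⟩ := hX
  refine ⟨{x}, ⟨Finset.isAtom_iff.2 ⟨x, rfl⟩, label_eq_top_iff.1 hx⟩, ?_⟩
  rintro s ⟨hs, hsP⟩
  obtain ⟨y, rfl⟩ := Finset.isAtom_iff.1 hs
  rw [huniq y (label_eq_top_iff.2 hsP)]

end LabelledChain

/-! ### Duality between ordered algebras and labelled chains -/

namespace OrdAlg

variable {J : Type} [LinearOrder J] {A B C : OrdAlg J}

namespace Emb

/-- The Boolean homomorphism underlying an embedding. -/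
def toBoundedLatticeHom (f : Emb A B) : BoundedLatticeHom A.carrier B.carrier where
  toFun := f.toFun
  map_sup' := f.map_sup
  map_inf' := f.map_inf
  map_top' := f.map_top
  map_bot' := f.map_bot

/-- The composition of embeddings. -/
def comp (g : Emb B C) (f : Emb A B) : Emb A C where
  toFun := g.toFun ∘ f.toFun
  inj := g.inj.comp f.inj
  map_sup x y := by simp only [Function.comp_apply, f.map_sup, g.map_sup]
  map_inf x y := by simp only [Function.comp_apply, f.map_inf, g.map_inf]
  map_compl x := by simp only [Function.comp_apply, f.map_compl, g.map_compl]
  map_bot := by simp only [Function.comp_apply, f.map_bot, g.map_bot]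
  map_top := by simp only [Function.comp_apply, f.map_top, g.map_top]
  map_lt x y := (f.map_lt x y).trans (g.map_lt _ _)
  map_P j x := (f.map_P j x).trans (g.map_P j _)

end Emb

/-- An isomorphism of ordered `J`-algebras. The Boolean operations are preserved because the
inclusion order is. -/
structure Iso (A B : OrdAlg J) where
  toOrderIso : A.carrier ≃o B.carrier
  map_lt : ∀ x y, A.lt x y ↔ B.lt (toOrderIso x) (toOrderIso y)
  map_P : ∀ j x, x ∈ A.P j ↔ toOrderIso x ∈ B.P j

namespace Iso

/-- The inverse isomorphism. -/
def symm (e : Iso A B) : Iso B A where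
  toOrderIso := e.toOrderIso.symm
  map_lt x y := by simpa using (e.map_lt (e.toOrderIso.symm x) (e.toOrderIso.symm y)).symm
  map_P j x := by simpa using (e.map_P j (e.toOrderIso.symm x)).symm

/-- An isomorphism regarded as an embedding. -/
def toEmb (e : Iso A B) : Emb A B where
  toFun := e.toOrderIso
  inj := e.toOrderIso.injective
  map_sup := e.toOrderIso.map_sup
  map_inf := e.toOrderIso.map_inf
  map_compl := map_compl' e.toOrderIso
  map_bot := e.toOrderIso.map_bot
  map_top := e.toOrderIso.map_top
  map_lt := e.map_lt
  map_P := e.map_P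

end Iso

end OrdAlg

theorem exists_greatest_section {α β : Type*} [LinearOrder β] [Finite β] {f : β → α}
    (hf : Function.Surjective f) : ∃ m : α → β, (∀ a, f (m a) = a) ∧ ∀ b, b ≤ m (f b) := by
  have hmax : ∀ a, ∃ b, f b = a ∧ ∀ b', f b' = a → b' ≤ b := fun a =>
    Set.exists_max_image (f ⁻¹' {a}) id (Set.toFinite _) (hf a)
  choose m hfm hm using hmax
  exact ⟨m, hfm, fun b => hm _ b rfl⟩

theorem strictMono_iff_strictMono_toColex_filter {α β : Type*} [LinearOrder α] [LinearOrder β]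
    [Fintype β] {f : β → α} {m : α → β} (hfm : ∀ a, f (m a) = a) (hmf : ∀ b, b ≤ m (f b)) :
    StrictMono m ↔
      StrictMono fun s : Colex (Finset α) => toColex ({b | f b ∈ ofColex s} : Finset β) := by
  refine ⟨fun hm s t hlt => ?_, fun hm a a' hlt => ?_⟩
  · rw [Finset.Colex.lt_iff_exists_forall_lt] at hlt ⊢
    obtain ⟨a, hat, has, hlt⟩ := hlt
    refine ⟨m a, by simpa [hfm], by simpa [hfm], fun b hbs hbt => ?_⟩
    exact (hmf b).trans_lt (hm (hlt (f b) (by simpa using hbs) (by simpa using hbt)))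
  · obtain ⟨b, hb, -, hbm⟩ := Finset.Colex.lt_iff_exists_forall_lt.1
      (hm (Finset.Colex.singleton_lt_singleton.2 hlt))
    have hfb : f b = a' := by simpa using hb
    calc m a < b := hbm (m a) (by simp [hfm]) (by simp [hfm, hlt.ne])
      _ ≤ m a' := hfb ▸ hmf b

theorem exists_eq_filter_mem {α β : Type*} [Fintype α] [DecidableEq α] [Fintype β] [DecidableEq β]
    (h : BoundedLatticeHom (Finset α) (Finset β)) :
    ∃ f : β → α, ∀ s, h s = ({b | f b ∈ s} : Finset β) := by
  have hcover : ∀ b, ∃ a, b ∈ h {a} := fun b => by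
    have hb : b ∈ h (Finset.univ.sup singleton) := by
      rw [Finset.sup_singleton_eq_self, ← Finset.top_eq_univ, map_top]
      exact Finset.mem_univ b
    rw [map_finset_sup, Finset.mem_sup] at hb
    obtain ⟨a, -, ha⟩ := hb
    exact ⟨a, ha⟩
  choose f hf using hcover
  have hmem : ∀ {b s}, f b ∈ s → b ∈ h s := fun hs =>
    OrderHomClass.mono h (Finset.singleton_subset_iff.2 hs) (hf _)
  refine ⟨f, fun s => Finset.ext fun b => ?_⟩
  rw [Finset.mem_filter_univ]
  refine ⟨fun hb => ?_, hmem⟩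
  by_contra hs
  have hbc : b ∈ h sᶜ := hmem (Finset.mem_compl.2 hs)
  rw [map_compl'] at hbc
  exact Finset.mem_compl.1 hbc hb

namespace RigidSurj_s6

variable {J : Type} [LinearOrder J] {X Y Z : LabelledChain (UpperSet J)}

/-- The embedding dual to a rigid surjection: taking preimages. -/
def emb (φ : RigidSurj_s6 Y X) : OrdAlg.Emb X.algebra Y.algebra where
  toFun s := ({y | φ y ∈ s} : Finset Y)
  inj s t heq := Finset.ext fun x => by simpa using Finset.ext_iff.1 heq (φ.sec x)
  map_sup s t := Finset.ext fun y => by simp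
  map_inf s t := Finset.ext fun y => by simp
  map_compl s := Finset.ext fun y => by simp
  map_bot := Finset.ext fun y => by simp
  map_top := Finset.ext fun y => by simp
  map_lt s t := by
    have hmono :=
      (strictMono_iff_strictMono_toColex_filter φ.toFun_sec φ.le_sec).1 φ.sec_strictMono
    exact (hmono.lt_iff_lt (a := toColex s) (b := toColex t)).symm
  map_P j s := by
    refine and_congr (by rw [φ.base_eq]) ⟨fun hs y hy => ?_, fun hs x hx => ?_⟩
    · exact φ.label_le y (hs (φ y) (by simpa using hy))
    · rw [← φ.label_sec]
      exact hs (φ.sec x) (by simpa using hx)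

theorem surjective_of_emb_eq_filter {f : OrdAlg.Emb X.algebra Y.algebra} {φ : Y → X}
    (hφ : ∀ s, f.toFun s = ({y | φ y ∈ s} : Finset Y)) : Function.Surjective φ := by
  intro x
  by_contra! hx
  have hempty : f.toFun {x} = f.toFun (∅ : Finset X) := by simp [hφ, hx]
  exact Finset.singleton_ne_empty x (f.inj hempty)

theorem label_greatest_of_emb_eq_filter {f : OrdAlg.Emb X.algebra Y.algebra} {φ : Y → X} {m : X → Y}
    (hφ : ∀ s, f.toFun s = ({y | φ y ∈ s} : Finset Y)) (hφm : ∀ x, φ (m x) = x)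
    (hmφ : ∀ y, y ≤ m (φ y)) (x : X) : Y.label (m x) = X.label x := by
  refine UpperSet.ext (Set.ext fun j => ?_)
  have hmem : ({x} : Finset X) ∈ X.algebra.P j ↔
      j ∈ Y.base ∧ ∀ y, φ y = x → j ∈ Y.label y := by
    rw [f.map_P, hφ]
    simp
  rw [SetLike.mem_coe, SetLike.mem_coe, ← LabelledChain.singleton_mem_P (x := x), hmem]
  refine ⟨fun hj => ⟨Y.base_le_label _ hj, ?_⟩, fun hj => hj.2 _ (hφm x)⟩
  rintro y rfl
  exact Y.label_mono (hmφ y) hj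

theorem base_eq_of_emb (f : OrdAlg.Emb X.algebra Y.algebra) : Y.base = X.base := by
  refine UpperSet.ext (Set.ext fun j => ?_)
  have hbot := f.map_P j (∅ : Finset X)
  rw [show f.toFun (∅ : Finset X) = (∅ : Finset Y) from f.map_bot] at hbot
  simpa using hbot.symm

theorem exists_emb_eq (f : OrdAlg.Emb X.algebra Y.algebra) :
    ∃ φ : RigidSurj_s6 Y X, φ.emb.toFun = f.toFun := by
  obtain ⟨φ, hφ⟩ : ∃ φ : Y → X, ∀ s, f.toFun s = ({y | φ y ∈ s} : Finset Y) :=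
    exists_eq_filter_mem f.toBoundedLatticeHom
  obtain ⟨m, hφm, hmφ⟩ := exists_greatest_section (surjective_of_emb_eq_filter hφ)
  have hmono : StrictMono fun s : Colex (Finset X) =>
      toColex ({y | φ y ∈ ofColex s} : Finset Y) := fun s t hlt => by
    simpa only [hφ] using (f.map_lt (ofColex s) (ofColex t)).1 hlt
  exact ⟨{ toFun := φ
           sec := m
           toFun_sec := hφm
           le_sec := hmφ
           sec_strictMono := (strictMono_iff_strictMono_toColex_filter hφm hmφ).2 hmono
           label_sec := label_greatest_of_emb_eq_filter hφ hφm hmφ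
           base_eq := base_eq_of_emb f }, (funext hφ).symm⟩

theorem emb_amalgamFst_emb (φ : RigidSurj_s6 Y X) (ψ : RigidSurj_s6 Z X) (s : Finset X) :
    (amalgamFst φ ψ).emb.toFun (φ.emb.toFun s) = (amalgamSnd φ ψ).emb.toFun (ψ.emb.toFun s) :=
  Finset.ext fun d => by simp [emb, amalgamFst, amalgamSnd, d.comm]

end RigidSurj_s6

namespace OrdAlg

variable {J : Type} [LinearOrder J] {A : OrdAlg J}

/-- The atoms of an ordered `J`-algebra. This is not a reducible definition, so that the inclusion
order of the algebra does not become an instance on it. -/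
def Atom (A : OrdAlg J) : Type := {a : A.carrier // IsAtom a}

noncomputable instance : Fintype A.Atom := .ofInjective Subtype.val Subtype.val_injective

/-- A finite Boolean algebra is isomorphic to the powerset of its atoms. -/
noncomputable def atomsBelow (A : OrdAlg J) : A.carrier ≃o Finset A.Atom :=
  letI := Fintype.toCompleteAtomicBooleanAlgebra A.carrier
  CompleteAtomicBooleanAlgebra.toSetOfIsAtom.trans
    (Fintype.finsetOrderIsoSet (α := A.Atom)).symm

theorem mem_atomsBelow {a : A.Atom} {x : A.carrier} : a ∈ A.atomsBelow x ↔ a.1 ≤ x :=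
  Set.ext_iff.1 ((Fintype.finsetOrderIsoSet (α := A.Atom)).apply_symm_apply {b | b.1 ≤ x}) a

/-- The restriction of a natural ordering to the atoms. -/
noncomputable abbrev Natural.linearOrderAtom (hN : A.Natural) : LinearOrder A.Atom :=
  have := hN.1
  have : IsStrictTotalOrder A.Atom fun a b => A.lt a.1 b.1 :=
    (Subrel.relEmbedding A.lt IsAtom).isStrictTotalOrder
  letI := Classical.decRel fun a b : A.Atom => A.lt a.1 b.1
  linearOrderOfSTO fun a b : A.Atom => A.lt a.1 b.1

/-- The atoms of a naturally ordered `J`-algebra, labelled by the ideals containing them. -/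
noncomputable def atomChain (hI : A.IdealFam) (hN : A.Natural) : LabelledChain (UpperSet J) :=
  letI := hN.linearOrderAtom
  { carrier := A.Atom
    base := ⟨{j | ⊥ ∈ A.P j}, fun i j hij h => hI.2.2.2 i j hij h⟩
    label a := ⟨{j | a.1 ∈ A.P j}, fun i j hij h => hI.2.2.2 i j hij h⟩
    label_mono a b hle j ha := by_contra fun hb =>
      not_lt_of_ge hle (hN.2.1 b.1 a.1 b.2 a.2 ⟨j, ha, hb⟩)
    base_le_label _ j ha := hI.2.1 j _ ha _ bot_le }

theorem IdealFam.mem_P_iff (hI : A.IdealFam) {j : J} {x : A.carrier} :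
    x ∈ A.P j ↔ ⊥ ∈ A.P j ∧ ∀ a ∈ A.atomsBelow x, a.1 ∈ A.P j := by
  obtain ⟨-, hdown, hsup, -⟩ := hI
  refine ⟨fun hx => ⟨hdown j x hx _ bot_le, fun a ha => hdown j x hx _ (mem_atomsBelow.1 ha)⟩,
    fun ⟨hbot, hatoms⟩ => ?_⟩
  have hx : x ≤ (A.atomsBelow x).sup Subtype.val := BooleanAlgebra.le_iff_atom_le_imp.2
    fun a ha hax => Finset.le_sup (f := Subtype.val) (b := (⟨a, ha⟩ : A.Atom))
      (mem_atomsBelow.2 hax)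
  exact hdown j _ (Finset.sup_induction hbot (hsup j) hatoms) x hx

theorem Natural.lt_iff (hN : A.Natural) {x y : A.carrier} :
    A.lt x y ↔ letI := hN.linearOrderAtom
      toColex (A.atomsBelow x) < toColex (A.atomsBelow y) := by
  let := hN.linearOrderAtom
  obtain rfl | hne := eq_or_ne x y
  · have := hN.1
    exact iff_of_false (irrefl x) (lt_irrefl _)
  rw [hN.2.2 x y hne, toColex_lt_toColex_iff_exists_greatest]
  simp only [mem_atomsBelow]
  constructor
  · rintro ⟨a, ha, hay, hax, hmax⟩
    exact ⟨⟨a, ha⟩, hay, hax, fun b hb => (hmax b.1 b.2 hb).imp_left Subtype.ext⟩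
  · rintro ⟨a, hay, hax, hmax⟩
    exact ⟨a.1, a.2, hay, hax, fun b hb hbxy =>
      (hmax ⟨b, hb⟩ hbxy).imp_left (congrArg Subtype.val)⟩

theorem InNaBJu.exists_iso_algebra (hA : A.InNaBJu) :
    ∃ X : LabelledChain (UpperSet J), (∃! x, X.label x = ⊤) ∧ Nonempty (Iso A X.algebra) := by
  obtain ⟨hI, hN, a, ⟨ha, haP⟩, huniq⟩ := hA
  refine ⟨atomChain hI hN, ⟨⟨a, ha⟩, upperSet_eq_top_iff.2 haP, fun b hb => ?_⟩,
    ⟨A.atomsBelow, fun _ _ => hN.lt_iff, fun _ _ => hI.mem_P_iff⟩⟩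
  exact Subtype.ext (huniq b.1 ⟨b.2, upperSet_eq_top_iff.1 hb⟩)

end OrdAlg

theorem naBJu_amalgamation {J : Type} [LinearOrder J]
    (A B C : OrdAlg J) (hA : A.InNaBJu) (hB : B.InNaBJu) (hC : C.InNaBJu)
    (f : OrdAlg.Emb A B) (g : OrdAlg.Emb A C) :
    ∃ D : OrdAlg J, D.InNaBJu ∧
      ∃ (r : OrdAlg.Emb B D) (s : OrdAlg.Emb C D),
        r.toFun ∘ f.toFun = s.toFun ∘ g.toFun := by
  obtain ⟨X, -, ⟨eA⟩⟩ := hA.exists_iso_algebra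
  obtain ⟨Y, hY, ⟨eB⟩⟩ := hB.exists_iso_algebra
  obtain ⟨Z, hZ, ⟨eC⟩⟩ := hC.exists_iso_algebra
  obtain ⟨φ, hφ⟩ := RigidSurj_s6.exists_emb_eq ((eB.toEmb.comp f).comp eA.symm.toEmb)
  obtain ⟨ψ, hψ⟩ := RigidSurj_s6.exists_emb_eq ((eC.toEmb.comp g).comp eA.symm.toEmb)
  have hf : ∀ a, eB.toEmb.toFun (f.toFun a) = φ.emb.toFun (eA.toEmb.toFun a) := fun a => by
    simp [hφ, OrdAlg.Emb.comp, OrdAlg.Iso.symm, OrdAlg.Iso.toEmb]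
  have hg : ∀ a, eC.toEmb.toFun (g.toFun a) = ψ.emb.toFun (eA.toEmb.toFun a) := fun a => by
    simp [hψ, OrdAlg.Emb.comp, OrdAlg.Iso.symm, OrdAlg.Iso.toEmb]
  refine ⟨(φ.amalgam ψ).algebra,
    LabelledChain.inNaBJu_algebra (φ.existsUnique_label_amalgam_eq_top ψ hY hZ),
    (φ.amalgamFst ψ).emb.comp eB.toEmb, (φ.amalgamSnd ψ).emb.comp eC.toEmb, funext fun a => ?_⟩
  calc (φ.amalgamFst ψ).emb.toFun (eB.toEmb.toFun (f.toFun a))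
      = (φ.amalgamFst ψ).emb.toFun (φ.emb.toFun (eA.toEmb.toFun a)) := by rw [hf]
    _ = (φ.amalgamSnd ψ).emb.toFun (ψ.emb.toFun (eA.toEmb.toFun a)) :=
      φ.emb_amalgamFst_emb ψ _
    _ = (φ.amalgamSnd ψ).emb.toFun (eC.toEmb.toFun (g.toFun a)) := by rw [hg]
end
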